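/- For every real number λ > 0, ∫₀^∞ e^{-λx} [ (1-e^{-x})^{-1/2} (1+e^{-x})^{1/2} + (1-e^{-x})^{1/2} (1+e^{-x})^{-1/2} ] dx = √π · Γ(λ/2) / Γ((λ+1)/2). -/

import Mathlib

open MeasureTheory Real Set

/-!
Since `(1 - e⁻ˣ) + (1 + e⁻ˣ) = 2` and `(1 - e⁻ˣ)(1 + e⁻ˣ) = 1 - e⁻²ˣ`, the bracket collapses to
`2 (1 - e⁻²ˣ)^(-1/2)`. The substitution `t = e⁻²ˣ` then turns the Laplace transform into Euler's
Beta integral `B(l/2, 1/2)`.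
-/

section ChangeOfVariables

variable {E : Type*} [NormedAddCommGroup E] [NormedSpace ℝ E]

theorem integral_comp_exp_Iio (g : ℝ → E) (a : ℝ) :
    ∫ x in Iio a, exp x • g (exp x) = ∫ t in Ioo 0 (exp a), g t := by
  rw [← image_exp_Iio, integral_image_eq_integral_deriv_smul_of_monotoneOn measurableSet_Iio
    (fun x _ ↦ (hasDerivAt_exp x).hasDerivWithinAt) (exp_monotone.monotoneOn _)]

theorem integral_comp_exp_neg_Ioi (g : ℝ → E) (a : ℝ) :
    ∫ x in Ioi a, exp (-x) • g (exp (-x)) = ∫ t in Ioo 0 (exp (-a)), g t := by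
  rw [integral_comp_neg_Ioi a (fun x ↦ exp x • g (exp x)), integral_Iic_eq_integral_Iio,
    integral_comp_exp_Iio]

end ChangeOfVariables

theorem ofReal_exp_cpow (x : ℝ) (u : ℂ) : (exp x : ℂ) ^ u = Complex.exp (x * u) := by
  rw [Complex.cpow_def_of_ne_zero (by simp), ← Complex.ofReal_log (exp_pos x).le, log_exp]

theorem betaIntegral_eq_integral_exp (u v : ℂ) :
    Complex.betaIntegral u v =
      ∫ x in Ioi (0 : ℝ), Complex.exp (-u * x) * (1 - Complex.exp (-x)) ^ (v - 1) := by
  have hsubst := integral_comp_exp_neg_Ioi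
    (fun t : ℝ ↦ (t : ℂ) ^ (u - 1) * (1 - (t : ℂ)) ^ (v - 1)) 0
  rw [neg_zero, exp_zero] at hsubst
  rw [Complex.betaIntegral, intervalIntegral.integral_of_le zero_le_one,
    integral_Ioc_eq_integral_Ioo, ← hsubst]
  congr with x
  have hexp : Complex.exp (-x) * Complex.exp (-x * (u - 1)) = Complex.exp (-u * x) := by
    rw [← Complex.exp_add]
    ring_nf
  rw [ofReal_exp_cpow, Complex.real_smul]
  push_cast
  rw [← mul_assoc, hexp]

theorem rpow_mul_rpow_add_one_add {p q : ℝ} (hp : 0 < p) (hq : 0 < q) (a : ℝ) :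
    p ^ a * q ^ (a + 1) + p ^ (a + 1) * q ^ a = (p + q) * (p * q) ^ a := by
  rw [rpow_add_one hp.ne', rpow_add_one hq.ne', mul_rpow hp.le hq.le]
  ring

theorem one_sub_exp_neg_rpow_mul_one_add_exp_neg_rpow_add {x : ℝ} (hx : 0 < x) (a : ℝ) :
    (1 - exp (-x)) ^ a * (1 + exp (-x)) ^ (a + 1)
        + (1 - exp (-x)) ^ (a + 1) * (1 + exp (-x)) ^ a =
      2 * (1 - exp (-(2 * x))) ^ a := by
  have hsub : 0 < 1 - exp (-x) := by simpa using hx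
  have hprod : (1 - exp (-x)) * (1 + exp (-x)) = 1 - exp (-(2 * x)) := by
    rw [two_mul, neg_add, exp_add]
    ring
  rw [rpow_mul_rpow_add_one_add hsub (by positivity), hprod]
  ring

theorem integral_exp_mul_one_sub_exp_neg_rpow_add_eq_betaIntegral (l : ℂ) (a : ℝ) :
    ∫ x in Ioi (0 : ℝ), Complex.exp (-l * x) *
        (((1 - exp (-x)) ^ a * (1 + exp (-x)) ^ (a + 1)
          + (1 - exp (-x)) ^ (a + 1) * (1 + exp (-x)) ^ a : ℝ) : ℂ) =
      Complex.betaIntegral (l / 2) (a + 1) := by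
  have hscale := integral_comp_mul_left_Ioi'
    (fun y : ℝ ↦ Complex.exp (-(l / 2) * y) * (1 - Complex.exp (-y)) ^ ((a : ℂ) + 1 - 1))
    0 two_pos
  rw [mul_zero] at hscale
  rw [betaIntegral_eq_integral_exp, ← hscale, ← integral_smul]
  refine setIntegral_congr_fun measurableSet_Ioi fun x (hx : 0 < x) ↦ ?_
  have hbase : 0 ≤ 1 - exp (-(2 * x)) := by simpa using hx.le
  simp only [one_sub_exp_neg_rpow_mul_one_add_exp_neg_rpow_add hx, Complex.ofReal_mul,
    Complex.ofReal_cpow hbase, Complex.real_smul, add_sub_cancel_right]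
  push_cast
  ring_nf

theorem stmt_14_general (l : ℂ) (hl : 0 < l.re) :
    ∫ x in Ioi (0 : ℝ), Complex.exp (-l * x) *
        (((1 - exp (-x)) ^ (-(1 : ℝ) / 2) * (1 + exp (-x)) ^ ((1 : ℝ) / 2)
          + (1 - exp (-x)) ^ ((1 : ℝ) / 2) * (1 + exp (-x)) ^ (-(1 : ℝ) / 2) : ℝ) : ℂ) =
      √π * Complex.Gamma (l / 2) / Complex.Gamma ((l + 1) / 2) := by
  have hbeta := integral_exp_mul_one_sub_exp_neg_rpow_add_eq_betaIntegral l (-1 / 2)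
  have hexponent : (-1 / 2 : ℝ) + 1 = 1 / 2 := by norm_num
  have hexponentC : ((-1 / 2 : ℝ) : ℂ) + 1 = 1 / 2 := by norm_num
  have hGamma : Complex.Gamma (1 / 2) = √π := by
    rw [← Gamma_one_half_eq, ← Complex.Gamma_ofReal]
    norm_num
  rw [hexponentC, Complex.betaIntegral_eq_Gamma_mul_div _ _ (by simpa using hl) (by norm_num),
    hGamma, ← add_div, mul_comm (Complex.Gamma _), hexponent] at hbeta
  exact hbeta

theorem stmt_14 (l : ℝ) (hl : 0 < l) :
    (∫ x in Ioi (0:ℝ),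
        Real.exp (-l * x) *
          ((1 - Real.exp (-x)) ^ (-(1:ℝ)/2) * (1 + Real.exp (-x)) ^ ((1:ℝ)/2)
            + (1 - Real.exp (-x)) ^ ((1:ℝ)/2) * (1 + Real.exp (-x)) ^ (-(1:ℝ)/2)))
      = Real.sqrt Real.pi * Real.Gamma (l / 2) / Real.Gamma ((l + 1) / 2) := by
  rw [← Complex.ofReal_inj, Complex.ofReal_div, Complex.ofReal_mul, ← Complex.Gamma_ofReal,
    ← Complex.Gamma_ofReal]
  exact_mod_cast stmt_14_general l hl
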